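/- arXiv:1710.09670 — 4 statements merged into one kernel-verified Lean document; each statement's English description precedes it below -/
import Mathlib

section
/- Root count via Rouché's theorem: For every complex u with |u| < 1, the function k(w) = w^s − u·A(w) has no zeros on the unit circle |w| = 1, and has exactly s zeros, counted with multiplicity (i.e., the sum over zeros ζ with |ζ| < 1 of the order of vanishing of k at ζ equals s), in the open unit disk |w| < 1. -/
open MeasureTheory ProbabilityTheory Filter

/-- The probability generating function `A(z) = E(z^A) = ∑_j P(A = j) z^j`. -/
noncomputable def pgf {Ω : Type*} [MeasureSpace Ω] (A : Ω → ℕ) (z : ℂ) : ℂ :=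
  ∑' j : ℕ, ((ℙ {ω | A ω = j}).toReal : ℂ) * z ^ j

/-!
Since `‖A(w)‖ ≤ 1` on the closed unit disk, `‖u A(w)‖ ≤ ‖u‖ < ‖w‖ ^ s` on every circle whose radius
`r ≤ 1` is close enough to `1`. Hence `k(w) = w ^ s - u A(w)` has no zeros with `r ≤ ‖w‖ ≤ 1`, and
by Rouché's theorem on the circle of radius `r < 1` it has as many zeros in `‖w‖ < r` as `w ^ s`.

Rouché's theorem comes from the argument principle `∮ f' / f = 2πi · #zeros`: if `f / g` avoids
`(-∞, 0]` on the circle, then `f' / f - g' / g` has the primitive `log (f / g)` there, so its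
integral vanishes.
-/

open Metric Complex Topology

section Zeros

variable {𝕜 E : Type*} [NontriviallyNormedField 𝕜] [NormedAddCommGroup E] [NormedSpace 𝕜 E]
  {f g : 𝕜 → E} {U : Set 𝕜} {a z : 𝕜}

lemma exists_eq_pow_analyticOrderNatAt_smul (hf : AnalyticOnNhd 𝕜 f U) (ha : a ∈ U)
    (hord : analyticOrderAt f a ≠ ⊤) :
    ∃ g : 𝕜 → E, AnalyticOnNhd 𝕜 g U ∧ g a ≠ 0 ∧
      f = fun w ↦ (w - a) ^ analyticOrderNatAt f a • g w := by
  classical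
  obtain ⟨h, hh, hha, hfh⟩ := (hf a ha).analyticOrderAt_ne_top.1 hord
  set n := analyticOrderNatAt f a
  let g : 𝕜 → E := Function.update (fun w ↦ ((w - a) ^ n)⁻¹ • f w) a (h a)
  have hga : g a = h a := Function.update_self ..
  have hg_of_ne {w : 𝕜} (hw : w ≠ a) : g w = ((w - a) ^ n)⁻¹ • f w := Function.update_of_ne hw ..
  have hpow {w : 𝕜} (hw : w ≠ a) : (w - a) ^ n ≠ 0 := pow_ne_zero _ (sub_ne_zero.2 hw)
  refine ⟨g, fun b hb ↦ ?_, hga ▸ hha, funext fun w ↦ ?_⟩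
  · obtain rfl | hba := eq_or_ne b a
    · refine hh.congr ?_
      filter_upwards [hfh] with w hw
      obtain rfl | hwb := eq_or_ne w b
      · exact hga.symm
      · rw [hg_of_ne hwb, hw, inv_smul_smul₀ (hpow hwb)]
    · have hinv : AnalyticAt 𝕜 (fun w ↦ ((w - a) ^ n)⁻¹) b :=
        AnalyticAt.inv (by fun_prop) (hpow hba)
      refine (hinv.smul (hf b hb)).congr ?_
      filter_upwards [isOpen_ne.mem_nhds hba] with w hw using (hg_of_ne hw).symm
  · obtain rfl | hw := eq_or_ne w a
    · exact hga ▸ hfh.self_of_nhds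
    · rw [hg_of_ne hw, smul_inv_smul₀ (hpow hw)]

lemma analyticOrderAt_sub_pow_smul_of_ne (hg : AnalyticAt 𝕜 g z) (hz : z ≠ a) (n : ℕ) :
    analyticOrderAt (fun w ↦ (w - a) ^ n • g w) z = analyticOrderAt g z := by
  have hpow : AnalyticAt 𝕜 (fun w ↦ (w - a) ^ n) z := by fun_prop
  have hpow0 : analyticOrderAt (fun w ↦ (w - a) ^ n) z = 0 :=
    hpow.analyticOrderAt_eq_zero.2 (pow_ne_zero _ (sub_ne_zero.2 hz))
  exact (analyticOrderAt_smul hpow hg).trans (by rw [hpow0, zero_add])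

lemma analyticOrderAt_ne_top_of_ne_zero (hf : AnalyticOnNhd 𝕜 f U) (hU : IsPreconnected U)
    (ha : a ∈ U) (hfa : f a ≠ 0) (hz : z ∈ U) : analyticOrderAt f z ≠ ⊤ :=
  hf.analyticOrderAt_ne_top_of_isPreconnected hU ha hz <| by
    simp [(hf a ha).analyticOrderAt_eq_zero.2 hfa]

lemma finite_zeros_of_isCompact (hf : AnalyticOnNhd 𝕜 f U) (hcompact : IsCompact U)
    (hconn : IsPreconnected U) (ha : a ∈ U) (hfa : f a ≠ 0) : {z ∈ U | f z = 0}.Finite :=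
  (hcompact.finite_sdiff_of_mem_codiscreteWithin
    (hf.preimage_zero_mem_codiscreteWithin hfa ha ⟨⟨a, ha⟩, hconn⟩)).subset
    fun _ hz ↦ ⟨hz.1, fun h ↦ h hz.2⟩

/-- The number of zeros of `f` in `U`, counted with multiplicity. It is meaningful for `f` analytic
at the points of `U` with finitely many zeros in `U`, all of finite order: zeros of infinite order
count as `0`, and infinitely many zeros of finite order give the junk value `0`. -/
noncomputable def zeroCount (f : 𝕜 → E) (U : Set 𝕜) : ℕ :=
  ∑ᶠ z ∈ U, analyticOrderNatAt f z

lemma zeroCount_eq_sum {Z : Finset 𝕜} (hZU : ↑Z ⊆ U) (hZ : ∀ z ∈ U, f z = 0 → z ∈ Z) :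
    zeroCount f U = ∑ z ∈ Z, analyticOrderNatAt f z :=
  finsum_mem_eq_sum_of_subset _
    (fun z hz ↦ hZ z hz.1 (apply_eq_zero_of_analyticOrderNatAt_ne_zero hz.2)) hZU

lemma exists_finset_zeros_sum_eq_zeroCount (hf : AnalyticOnNhd 𝕜 f U)
    (hord : ∀ z ∈ U, analyticOrderAt f z ≠ ⊤) (hfin : {z ∈ U | f z = 0}.Finite) :
    ∃ (Z : Finset 𝕜) (ord : 𝕜 → ℕ), (∀ ζ, ζ ∈ Z ↔ ζ ∈ U ∧ f ζ = 0) ∧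
      (∀ ζ ∈ Z, ∃ g : 𝕜 → E, AnalyticAt 𝕜 g ζ ∧ g ζ ≠ 0 ∧
        ∀ᶠ w in 𝓝 ζ, f w = (w - ζ) ^ ord ζ • g w) ∧
      ∑ ζ ∈ Z, ord ζ = zeroCount f U := by
  have hmem (ζ : 𝕜) : ζ ∈ hfin.toFinset ↔ ζ ∈ U ∧ f ζ = 0 := hfin.mem_toFinset
  refine ⟨hfin.toFinset, analyticOrderNatAt f, hmem, fun ζ hζ ↦ ?_, ?_⟩
  · have hζU := ((hmem ζ).1 hζ).1
    exact (hf ζ hζU).analyticOrderAt_ne_top.1 (hord ζ hζU)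
  · exact (zeroCount_eq_sum (fun z hz ↦ ((hmem z).1 hz).1) fun z hzU hz ↦
      (hmem z).2 ⟨hzU, hz⟩).symm

lemma zeroCount_pow {r : ℝ} (hr : 0 < r) (n : ℕ) :
    zeroCount (fun z : 𝕜 ↦ z ^ n) (ball 0 r) = n := by
  have horder : analyticOrderAt (fun z : 𝕜 ↦ z ^ n) 0 = n := by
    simpa [Pi.pow_def] using analyticOrderAt_centeredMonomial (z₀ := (0 : 𝕜)) (n := n)
  calc zeroCount (fun z : 𝕜 ↦ z ^ n) (ball 0 r)
    _ = ∑ z ∈ {0}, analyticOrderNatAt (fun z : 𝕜 ↦ z ^ n) z :=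
      zeroCount_eq_sum (by simpa using hr) fun z _ hz ↦ by simpa using eq_zero_of_pow_eq_zero hz
    _ = n := by rw [Finset.sum_singleton, analyticOrderNatAt, horder, ENat.toNat_natCast]

end Zeros

section ArgumentPrinciple

variable {f g : ℂ → ℂ} {c : ℂ} {r : ℝ}

lemma analyticOnNhd_logDeriv {U : Set ℂ} (hf : AnalyticOnNhd ℂ f U) (h0 : ∀ z ∈ U, f z ≠ 0) :
    AnalyticOnNhd ℂ (logDeriv f) U :=
  hf.deriv.div hf h0

lemma circleIntegrable_logDeriv (hr : 0 ≤ r) (hf : AnalyticOnNhd ℂ f (sphere c r))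
    (h0 : ∀ z ∈ sphere c r, f z ≠ 0) : CircleIntegrable (logDeriv f) c r :=
  (analyticOnNhd_logDeriv hf h0).continuousOn.circleIntegrable hr

lemma circleIntegral_logDeriv_eq_zero_of_ne_zero (hr : 0 ≤ r)
    (hf : AnalyticOnNhd ℂ f (closedBall c r)) (h0 : ∀ z ∈ closedBall c r, f z ≠ 0) :
    (∮ z in C(c, r), logDeriv f z) = 0 := by
  have hd : DifferentiableOn ℂ (logDeriv f) (closedBall c r) :=
    (analyticOnNhd_logDeriv hf h0).differentiableOn
  exact (hd.mono closure_ball_subset_closedBall).diffContOnCl.circleIntegral_eq_zero hr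

lemma circleIntegral_logDeriv_eq_zero_of_mem_slitPlane (hr : 0 ≤ r)
    (hf : ∀ z ∈ sphere c r, DifferentiableAt ℂ f z) (hslit : ∀ z ∈ sphere c r, f z ∈ slitPlane) :
    (∮ z in C(c, r), logDeriv f z) = 0 :=
  circleIntegral.integral_eq_zero_of_hasDerivWithinAt hr fun z hz ↦
    ((hf z hz).hasDerivAt.clog (hslit z hz)).hasDerivWithinAt

lemma logDeriv_sub_pow_mul {a z : ℂ} (n : ℕ) (hz : z ≠ a) (hg : DifferentiableAt ℂ g z)
    (hgz : g z ≠ 0) :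
    logDeriv (fun w ↦ (w - a) ^ n * g w) z = n * (z - a)⁻¹ + logDeriv g z := by
  rw [logDeriv_mul (f := fun w ↦ (w - a) ^ n) z (pow_ne_zero _ (sub_ne_zero.2 hz)) hgz
      (by fun_prop) hg,
    logDeriv_fun_pow (by fun_prop), logDeriv_apply (fun w ↦ w - a)]
  simp

lemma circleIntegral_logDeriv_sub_pow_mul {a : ℂ} (n : ℕ) (ha : a ∈ ball c r)
    (hg : AnalyticOnNhd ℂ g (sphere c r)) (h0 : ∀ z ∈ sphere c r, g z ≠ 0) :
    (∮ z in C(c, r), logDeriv (fun w ↦ (w - a) ^ n * g w) z) =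
      2 * Real.pi * I * n + ∮ z in C(c, r), logDeriv g z := by
  have hr : 0 ≤ r := (pos_of_mem_ball ha).le
  have ha' : a ∉ sphere c r := fun h ↦ (mem_ball.1 ha).ne (mem_sphere.1 h)
  have hint : CircleIntegrable (fun z ↦ (n : ℂ) * (z - a)⁻¹) c r :=
    (circleIntegrable_sub_inv_iff.2 (.inr (by rwa [abs_of_nonneg hr]))).const_fun_smul
  calc (∮ z in C(c, r), logDeriv (fun w ↦ (w - a) ^ n * g w) z)
    _ = ∮ z in C(c, r), (n * (z - a)⁻¹ + logDeriv g z) :=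
      circleIntegral.integral_congr hr fun z hz ↦ logDeriv_sub_pow_mul n
        (ne_of_mem_of_not_mem hz ha') (hg z hz).differentiableAt (h0 z hz)
    _ = (∮ z in C(c, r), n * (z - a)⁻¹) + ∮ z in C(c, r), logDeriv g z :=
      circleIntegral.integral_add hint (circleIntegrable_logDeriv hr hg h0)
    _ = 2 * Real.pi * I * n + ∮ z in C(c, r), logDeriv g z := by
      rw [circleIntegral.integral_const_mul, circleIntegral.integral_sub_inv_of_mem_ball ha,
        mul_comm]

lemma circleIntegral_logDeriv_eq_sum (hr : 0 ≤ r) (Z : Finset ℂ) (hZ : ↑Z ⊆ ball c r)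
    (hf : AnalyticOnNhd ℂ f (closedBall c r)) (hzero : ∀ z ∈ closedBall c r, f z = 0 ↔ z ∈ Z)
    (hord : ∀ z ∈ Z, analyticOrderAt f z ≠ ⊤) :
    (∮ z in C(c, r), logDeriv f z) = 2 * Real.pi * I * ∑ z ∈ Z, (analyticOrderNatAt f z : ℂ) := by
  classical
  induction Z using Finset.induction_on generalizing f with
  | empty =>
    simpa using circleIntegral_logDeriv_eq_zero_of_ne_zero hr hf fun z hz h ↦ by
      simpa using (hzero z hz).1 h
  | insert a Z haZ ih =>
    rw [Finset.coe_insert, Set.insert_subset_iff] at hZ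
    obtain ⟨g, hg, hga, hfg⟩ := exists_eq_pow_analyticOrderNatAt_smul hf
      (ball_subset_closedBall hZ.1) (hord a (Finset.mem_insert_self ..))
    have hgzero (z : ℂ) (hz : z ∈ closedBall c r) : g z = 0 ↔ z ∈ Z := by
      obtain rfl | hza := eq_or_ne z a
      · simp [hga, haZ]
      · have := hzero z hz
        rw [hfg] at this
        simpa [sub_ne_zero.2 hza, hza] using this
    have hg_order {z : ℂ} (hz : z ∈ Z) : analyticOrderAt f z = analyticOrderAt g z := by
      rw [hfg]
      exact analyticOrderAt_sub_pow_smul_of_ne (hg z (ball_subset_closedBall (hZ.2 hz)))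
        (ne_of_mem_of_not_mem hz haZ) _
    have hg0 (z : ℂ) (hz : z ∈ sphere c r) : g z ≠ 0 := fun h ↦
      sphere_disjoint_ball.notMem_of_mem_left hz
        (hZ.2 ((hgzero z (sphere_subset_closedBall hz)).1 h))
    have ihg := ih hZ.2 hg hgzero fun z hz ↦
      hg_order hz ▸ hord z (Finset.mem_insert_of_mem hz)
    have hsum : ∑ z ∈ Z, (analyticOrderNatAt f z : ℂ) = ∑ z ∈ Z, (analyticOrderNatAt g z : ℂ) :=
      Finset.sum_congr rfl fun z hz ↦ by rw [analyticOrderNatAt, hg_order hz, analyticOrderNatAt]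
    calc (∮ z in C(c, r), logDeriv f z)
      _ = ∮ z in C(c, r), logDeriv (fun w ↦ (w - a) ^ analyticOrderNatAt f a * g w) z :=
        congrArg (fun h : ℂ → ℂ ↦ ∮ z in C(c, r), logDeriv h z) hfg
      _ = 2 * Real.pi * I * analyticOrderNatAt f a + ∮ z in C(c, r), logDeriv g z :=
        circleIntegral_logDeriv_sub_pow_mul _ hZ.1 (hg.mono sphere_subset_closedBall) hg0
      _ = 2 * Real.pi * I * ∑ z ∈ insert a Z, (analyticOrderNatAt f z : ℂ) := by
        rw [ihg, Finset.sum_insert haZ, hsum, mul_add]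

theorem circleIntegral_logDeriv_eq_zeroCount (hr : 0 ≤ r)
    (hf : AnalyticOnNhd ℂ f (closedBall c r)) (h0 : ∀ z ∈ sphere c r, f z ≠ 0) :
    (∮ z in C(c, r), logDeriv f z) = 2 * Real.pi * I * zeroCount f (ball c r) := by
  obtain ⟨a, ha⟩ : (sphere c r).Nonempty := NormedSpace.sphere_nonempty.2 hr
  have ha' := sphere_subset_closedBall ha
  have hconn : IsPreconnected (closedBall c r) := (convex_closedBall c r).isPreconnected
  have hfin := finite_zeros_of_isCompact hf (isCompact_closedBall c r) hconn ha' (h0 a ha)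
  have hmem (z : ℂ) : z ∈ hfin.toFinset ↔ z ∈ closedBall c r ∧ f z = 0 := hfin.mem_toFinset
  have hball : ↑hfin.toFinset ⊆ ball c r := fun z hz ↦ by
    obtain ⟨hz, hfz⟩ := (hmem z).1 hz
    exact (mem_closedBall.1 hz).lt_of_ne fun h ↦ h0 z h hfz
  rw [zeroCount_eq_sum hball fun z hz hfz ↦ (hmem z).2 ⟨ball_subset_closedBall hz, hfz⟩,
    circleIntegral_logDeriv_eq_sum hr _ hball hf (fun z hz ↦ by rw [hmem, and_iff_right hz])
      fun z hz ↦ analyticOrderAt_ne_top_of_ne_zero hf hconn ha' (h0 a ha) ((hmem z).1 hz).1,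
    Nat.cast_sum]

theorem zeroCount_eq_of_div_mem_slitPlane (hr : 0 ≤ r) (hf : AnalyticOnNhd ℂ f (closedBall c r))
    (hg : AnalyticOnNhd ℂ g (closedBall c r)) (hslit : ∀ z ∈ sphere c r, f z / g z ∈ slitPlane) :
    zeroCount f (ball c r) = zeroCount g (ball c r) := by
  have hfg0 (z : ℂ) (hz : z ∈ sphere c r) : f z ≠ 0 ∧ g z ≠ 0 :=
    div_ne_zero_iff.1 (slitPlane_ne_zero (hslit z hz))
  have hf0 (z : ℂ) (hz : z ∈ sphere c r) := (hfg0 z hz).1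
  have hg0 (z : ℂ) (hz : z ∈ sphere c r) := (hfg0 z hz).2
  have hfS : AnalyticOnNhd ℂ f (sphere c r) := hf.mono sphere_subset_closedBall
  have hgS : AnalyticOnNhd ℂ g (sphere c r) := hg.mono sphere_subset_closedBall
  have hintegral : (∮ z in C(c, r), logDeriv f z) - (∮ z in C(c, r), logDeriv g z) = 0 := calc
    _ = ∮ z in C(c, r), (logDeriv f z - logDeriv g z) :=
      (circleIntegral.integral_sub (circleIntegrable_logDeriv hr hfS hf0)
        (circleIntegrable_logDeriv hr hgS hg0)).symm
    _ = ∮ z in C(c, r), logDeriv (fun w ↦ f w / g w) z :=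
      circleIntegral.integral_congr hr fun z hz ↦ (logDeriv_div z (hf0 z hz) (hg0 z hz)
        (hfS z hz).differentiableAt (hgS z hz).differentiableAt).symm
    _ = 0 := circleIntegral_logDeriv_eq_zero_of_mem_slitPlane hr (fun z hz ↦
        (hfS z hz).differentiableAt.div (hgS z hz).differentiableAt (hg0 z hz)) hslit
  rw [circleIntegral_logDeriv_eq_zeroCount hr hf hf0,
    circleIntegral_logDeriv_eq_zeroCount hr hg hg0, sub_eq_zero] at hintegral
  exact_mod_cast mul_left_cancel₀ two_pi_I_ne_zero hintegral

/-- **Rouché's theorem**. -/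
theorem zeroCount_eq_of_norm_sub_lt (hr : 0 ≤ r) (hf : AnalyticOnNhd ℂ f (closedBall c r))
    (hg : AnalyticOnNhd ℂ g (closedBall c r)) (hlt : ∀ z ∈ sphere c r, ‖f z - g z‖ < ‖g z‖) :
    zeroCount f (ball c r) = zeroCount g (ball c r) := by
  refine zeroCount_eq_of_div_mem_slitPlane hr hf hg fun z hz ↦ ?_
  have hgz : 0 < ‖g z‖ := (norm_nonneg _).trans_lt (hlt z hz)
  have hquot : ‖(f z - g z) / g z‖ < 1 := by
    rw [norm_div, div_lt_one hgz]
    exact hlt z hz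
  have hsplit : f z / g z = 1 + (f z - g z) / g z := by
    rw [sub_div, div_self (norm_pos_iff.1 hgz), add_sub_cancel]
  exact hsplit ▸ mem_slitPlane_of_norm_lt_one hquot

end ArgumentPrinciple

section PowSub

variable {φ : ℂ → ℂ} {r b : ℝ} {s : ℕ}

lemma pow_sub_ne_zero_of_norm_lt {w : ℂ} (h : ‖φ w‖ < ‖w‖ ^ s) : w ^ s - φ w ≠ 0 := fun h0 ↦ by
  rw [← sub_eq_zero.1 h0, norm_pow] at h
  exact h.false

lemma zeroCount_pow_sub (hr : 0 < r) (hφ : AnalyticOnNhd ℂ φ (closedBall 0 r))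
    (hlt : ∀ w ∈ sphere 0 r, ‖φ w‖ < r ^ s) :
    zeroCount (fun w ↦ w ^ s - φ w) (ball 0 r) = s := by
  have hpow : AnalyticOnNhd ℂ (fun w : ℂ ↦ w ^ s) (closedBall 0 r) := fun w _ ↦ by fun_prop
  refine (zeroCount_eq_of_norm_sub_lt hr.le (hpow.sub hφ) hpow fun w hw ↦ ?_).trans
    (zeroCount_pow hr s)
  simpa [mem_sphere_zero_iff_norm.1 hw] using hlt w hw

lemma exists_lt_one_lt_pow (hb : b < 1) (s : ℕ) : ∃ r : ℝ, 0 < r ∧ r < 1 ∧ b < r ^ s := by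
  have hpow : ∀ᶠ r : ℝ in 𝓝[<] 1, b < r ^ s :=
    (((continuous_pow s).tendsto' 1 1 (one_pow s)).eventually_const_lt hb).filter_mono
      nhdsWithin_le_nhds
  obtain ⟨r, hbr, hr⟩ := (hpow.and (Ioo_mem_nhdsLT zero_lt_one)).exists
  exact ⟨r, hr.1, hr.2, hbr⟩

theorem exists_finset_zeros_pow_sub (hb : b < 1) (hφ : AnalyticOnNhd ℂ φ (ball 0 1))
    (hle : ∀ w, ‖w‖ < 1 → ‖φ w‖ ≤ b) :
    ∃ (Z : Finset ℂ) (ord : ℂ → ℕ), (∀ ζ, ζ ∈ Z ↔ ‖ζ‖ < 1 ∧ ζ ^ s - φ ζ = 0) ∧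
      (∀ ζ ∈ Z, ∃ g : ℂ → ℂ, AnalyticAt ℂ g ζ ∧ g ζ ≠ 0 ∧
        ∀ᶠ w in 𝓝 ζ, w ^ s - φ w = (w - ζ) ^ ord ζ * g w) ∧
      ∑ ζ ∈ Z, ord ζ = s := by
  obtain ⟨r, hr0, hr1, hbr⟩ := exists_lt_one_lt_pow hb s
  have hlt {w : ℂ} (hrw : r ≤ ‖w‖) (hw : ‖w‖ < 1) : ‖φ w‖ < ‖w‖ ^ s :=
    (hle w hw).trans_lt (hbr.trans_le (pow_le_pow_left₀ hr0.le hrw s))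
  have hφr : AnalyticOnNhd ℂ φ (closedBall 0 r) := hφ.mono (closedBall_subset_ball hr1)
  have hk : AnalyticOnNhd ℂ (fun w ↦ w ^ s - φ w) (closedBall 0 r) :=
    AnalyticOnNhd.sub (fun w _ ↦ by fun_prop) hφr
  obtain ⟨a, ha⟩ : (sphere (0 : ℂ) r).Nonempty := NormedSpace.sphere_nonempty.2 hr0.le
  have ha' := sphere_subset_closedBall ha
  have har : ‖a‖ = r := mem_sphere_zero_iff_norm.1 ha
  have hka : a ^ s - φ a ≠ 0 := pow_sub_ne_zero_of_norm_lt (hlt har.ge (har ▸ hr1))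
  have hconn : IsPreconnected (closedBall (0 : ℂ) r) := (convex_closedBall 0 r).isPreconnected
  have hfin := finite_zeros_of_isCompact hk (isCompact_closedBall 0 r) hconn ha' hka
  obtain ⟨Z, ord, hZ, hord, hsum⟩ := exists_finset_zeros_sum_eq_zeroCount
    (hk.mono ball_subset_closedBall)
    (fun z hz ↦ analyticOrderAt_ne_top_of_ne_zero hk hconn ha' hka (ball_subset_closedBall hz))
    (hfin.subset fun z hz ↦ ⟨ball_subset_closedBall hz.1, hz.2⟩)
  refine ⟨Z, ord, fun ζ ↦ ?_, hord, hsum.trans (zeroCount_pow_sub hr0 hφr fun w hw ↦ ?_)⟩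
  · rw [hZ, mem_ball_zero_iff]
    refine and_congr_left fun hζ ↦ ⟨fun h ↦ h.trans hr1, fun h ↦ ?_⟩
    exact not_le.1 fun hrζ ↦ pow_sub_ne_zero_of_norm_lt (hlt hrζ h) hζ
  · have hwr : ‖w‖ = r := mem_sphere_zero_iff_norm.1 hw
    exact hwr ▸ hlt hwr.ge (hwr ▸ hr1)

end PowSub

section Pgf

lemma hasSum_measureReal_eq {Ω α : Type*} {mΩ : MeasurableSpace Ω} {μ : Measure Ω}
    [IsProbabilityMeasure μ] [Countable α] [MeasurableSpace α] [MeasurableSingletonClass α]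
    {X : Ω → α} (hX : AEMeasurable X μ) : HasSum (fun a ↦ μ.real {ω | X ω = a}) 1 := by
  have := Measure.isProbabilityMeasure_map hX
  have hmap (a : α) : (μ.map X).toPMF a = μ {ω | X ω = a} :=
    Measure.map_apply_of_aemeasurable hX (measurableSet_singleton a)
  have htsum : ∑' a, μ {ω | X ω = a} = 1 := by
    simpa only [hmap] using (μ.map X).toPMF.tsum_coe
  have hreal := ENNReal.hasSum_toReal (htsum.trans_ne ENNReal.one_ne_top)
  rwa [← ENNReal.tsum_toReal_eq fun a ↦ measure_ne_top μ _, htsum, ENNReal.toReal_one] at hreal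

variable {Ω : Type*} [MeasureSpace Ω] {A : Ω → ℕ} {w : ℂ}

lemma norm_pgf_term_le (A : Ω → ℕ) (hw : ‖w‖ ≤ 1) (j : ℕ) :
    ‖((ℙ {ω | A ω = j}).toReal : ℂ) * w ^ j‖ ≤ (ℙ : Measure Ω).real {ω | A ω = j} := by
  rw [norm_mul, norm_pow, Complex.norm_of_nonneg ENNReal.toReal_nonneg]
  exact mul_le_of_le_one_right ENNReal.toReal_nonneg (pow_le_one₀ (norm_nonneg w) hw)

variable [IsProbabilityMeasure (ℙ : Measure Ω)]

lemma norm_pgf_le_one (hA : AEMeasurable A) (hw : ‖w‖ ≤ 1) : ‖pgf A w‖ ≤ 1 :=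
  tsum_of_norm_bounded (hasSum_measureReal_eq hA) (norm_pgf_term_le A hw)

lemma analyticOnNhd_pgf (hA : AEMeasurable A) : AnalyticOnNhd ℂ (pgf A) (ball 0 1) :=
  (differentiableOn_tsum_of_summable_norm (hasSum_measureReal_eq hA).summable
    (fun j ↦ by fun_prop) isOpen_ball fun j w hw ↦
      norm_pgf_term_le A (mem_ball_zero_iff.1 hw).le j).analyticOnNhd isOpen_ball

theorem rouche_root_count_general (s : ℕ) (A : Ω → ℕ) (hA : AEMeasurable A) (u : ℂ)
    (hu : ‖u‖ < 1) :
    (∀ w : ℂ, ‖w‖ = 1 → w ^ s - u * pgf A w ≠ 0) ∧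
    ∃ (Z : Finset ℂ) (ord : ℂ → ℕ),
      (∀ ζ : ℂ, ζ ∈ Z ↔ ‖ζ‖ < 1 ∧ ζ ^ s - u * pgf A ζ = 0) ∧
      (∀ ζ ∈ Z, ∃ g : ℂ → ℂ, AnalyticAt ℂ g ζ ∧ g ζ ≠ 0 ∧
        ∀ᶠ w in 𝓝 ζ, w ^ s - u * pgf A w = (w - ζ) ^ (ord ζ) * g w) ∧
      ∑ ζ ∈ Z, ord ζ = s := by
  have hle (w : ℂ) (hw : ‖w‖ ≤ 1) : ‖u * pgf A w‖ ≤ ‖u‖ := by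
    rw [norm_mul]
    exact mul_le_of_le_one_right (norm_nonneg u) (norm_pgf_le_one hA hw)
  refine ⟨fun w hw ↦ pow_sub_ne_zero_of_norm_lt (φ := fun w ↦ u * pgf A w) ?_, ?_⟩
  · simpa only [hw, one_pow] using (hle w hw.le).trans_lt hu
  · exact exists_finset_zeros_pow_sub hu (analyticOnNhd_const.mul (analyticOnNhd_pgf hA))
      fun w hw ↦ hle w hw.le

end Pgf

/-- **Root count via Rouché's theorem.**  For `|u| < 1` the function `k(w) = w^s - u A(w)` has no
zeros on the unit circle, and exactly `s` zeros counted with multiplicity in the open unit disk: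
there is a finite set `Z` consisting precisely of the zeros of `k` in `|w| < 1`, and an order
function `ord` such that at each `ζ ∈ Z` the function `k` vanishes to order exactly `ord ζ`
(i.e. `k w = (w - ζ)^(ord ζ) g w` near `ζ` with `g` analytic and `g ζ ≠ 0`), with
`∑_{ζ ∈ Z} ord ζ = s`. -/
theorem rouche_root_count
    {Ω : Type*} [MeasureSpace Ω] [IsProbabilityMeasure (ℙ : Measure Ω)]
    (s : ℕ) (hs : 0 < s)
    (A : Ω → ℕ)
    (hmeas : Measurable A)
    (hA0 : 0 < ℙ {ω | A ω = 0}) (hA0' : ℙ {ω | A ω = 0} < 1)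
    (R : ℝ) (hR : 1 < R)
    (hsum : ∀ z : ℂ, ‖z‖ < R →
      Summable fun j : ℕ => ((ℙ {ω | A ω = j}).toReal : ℂ) * z ^ j)
    (hanal : AnalyticOnNhd ℂ (pgf A) (Metric.ball 0 R))
    (u : ℂ) (hu : ‖u‖ < 1) :
    (∀ w : ℂ, ‖w‖ = 1 → w ^ s - u * pgf A w ≠ 0) ∧
    ∃ (Z : Finset ℂ) (ord : ℂ → ℕ),
      (∀ ζ : ℂ, ζ ∈ Z ↔ ‖ζ‖ < 1 ∧ ζ ^ s - u * pgf A ζ = 0) ∧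
      (∀ ζ ∈ Z, ∃ g : ℂ → ℂ, AnalyticAt ℂ g ζ ∧ g ζ ≠ 0 ∧
        ∀ᶠ w in nhds ζ, w ^ s - u * pgf A w = (w - ζ) ^ (ord ζ) * g w) ∧
      ∑ ζ ∈ Z, ord ζ = s :=
  rouche_root_count_general s A hmeas.aemeasurable u hu
end

section
/- Existence of a zero-free annulus: For every v ∈ (0,1) there exist real numbers a, b with 0 < a < 1 < b < R such that for every complex u with |u| ≤ v and every complex w with a ≤ |w| ≤ b one has |u·A(w)| < |w|^s; consequently w^s − u·A(w) ≠ 0 on the annulus a ≤ |w| ≤ b, and every zero ζ of w^s − u·A(w) with |ζ| ≤ 1 satisfies |ζ| < a. -/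
/-!
The triangle inequality bounds a power series `f(w) = ∑ c_j w^j` by its majorant
`M(r) = ∑ |c_j| r^j` at `r = |w|`, so `|u f(w)| < |w|^s` reduces to the real inequality
`v M(r) < r^s`. This holds at `r = 1` when `v ∑ |c_j| < 1`, hence on an interval around `1` by
continuity. For a probability generating function `∑ |c_j| = 1`.
-/

open MeasureTheory ProbabilityTheory

open scoped Topology

theorem continuousOn_tsum_mul_pow {𝕜 : Type*} [NormedDivisionRing 𝕜] [CompleteSpace 𝕜]
    {c : ℕ → 𝕜} {ρ : ℝ} (hc : Summable fun j => ‖c j‖ * ρ ^ j) :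
    ContinuousOn (fun w : 𝕜 => ∑' j, c j * w ^ j) (Metric.closedBall 0 ρ) := by
  refine continuousOn_tsum (fun j => by fun_prop) hc fun j w hw => ?_
  rw [norm_mul, norm_pow]
  gcongr
  exact mem_closedBall_zero_iff.mp hw

theorem exists_Icc_forall_mul_lt_pow {M : ℝ → ℝ} (hM : ContinuousAt M 1) {v : ℝ}
    (hv : v * M 1 < 1) {R : ℝ} (hR : 1 < R) (s : ℕ) :
    ∃ a b : ℝ, 0 < a ∧ a < 1 ∧ 1 < b ∧ b < R ∧ ∀ r ∈ Set.Icc a b, v * M r < r ^ s := by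
  have h_lt : ∀ᶠ r in 𝓝 (1 : ℝ), v * M r < r ^ s :=
    (hM.const_mul v).eventually_lt (continuousAt_id.pow s) (by simpa using hv)
  obtain ⟨a, b, -, h_nhds, h_sub⟩ :=
    exists_Icc_mem_subset_of_mem_nhds (h_lt.and (Ioo_mem_nhds one_pos hR))
  obtain ⟨ha, hb⟩ := Icc_mem_nhds_iff.mp h_nhds
  have hab : a ≤ b := (ha.trans hb).le
  exact ⟨a, b, (h_sub (Set.left_mem_Icc.mpr hab)).2.1, ha, hb,
    (h_sub (Set.right_mem_Icc.mpr hab)).2.2, fun r hr => (h_sub hr).1⟩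

section PowerSeries

variable {𝕜 : Type*} [RCLike 𝕜] {c : ℕ → 𝕜} {f : 𝕜 → 𝕜} {R : ℝ}

theorem summable_norm_mul_norm_pow {w : 𝕜} (hw : Summable fun j => c j * w ^ j) :
    Summable fun j => ‖c j‖ * ‖w‖ ^ j := by
  simpa only [norm_mul, norm_pow] using hw.norm

theorem norm_le_tsum_norm_mul_norm_pow {w y : 𝕜} (hw : HasSum (fun j => c j * w ^ j) y) :
    ‖y‖ ≤ ∑' j, ‖c j‖ * ‖w‖ ^ j :=
  hw.norm_le_of_bounded (summable_norm_mul_norm_pow hw.summable).hasSum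
    fun j => by rw [norm_mul, norm_pow]

theorem continuousAt_tsum_norm_mul_pow (hc : ∀ w : 𝕜, ‖w‖ < R → Summable fun j => c j * w ^ j)
    {r : ℝ} (hr : |r| < R) : ContinuousAt (fun x : ℝ => ∑' j, ‖c j‖ * x ^ j) r := by
  obtain ⟨ρ, hrρ, hρR⟩ := exists_between hr
  have h_norm_ρ : ‖(ρ : 𝕜)‖ = ρ := RCLike.norm_of_nonneg ((abs_nonneg r).trans hrρ.le)
  have h_summable : Summable fun j => ‖‖c j‖‖ * ρ ^ j := by
    simpa only [norm_norm, h_norm_ρ] using summable_norm_mul_norm_pow (hc ρ (by rwa [h_norm_ρ]))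
  exact (continuousOn_tsum_mul_pow h_summable).continuousAt
    (Metric.closedBall_mem_nhds_of_mem (mem_ball_zero_iff.mpr hrρ))

theorem exists_annulus_norm_mul_lt_pow (s : ℕ) (hR : 1 < R)
    (hf : ∀ w : 𝕜, ‖w‖ < R → HasSum (fun j => c j * w ^ j) (f w))
    {v : ℝ} (hv : v * ∑' j, ‖c j‖ < 1) :
    ∃ a b : ℝ, 0 < a ∧ a < 1 ∧ 1 < b ∧ b < R ∧
      ∀ u : 𝕜, ‖u‖ ≤ v → ∀ w : 𝕜, a ≤ ‖w‖ → ‖w‖ ≤ b → ‖u * f w‖ < ‖w‖ ^ s := by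
  have h_cont : ContinuousAt (fun r : ℝ => ∑' j, ‖c j‖ * r ^ j) 1 :=
    continuousAt_tsum_norm_mul_pow (fun w hw => (hf w hw).summable) (by rwa [abs_one])
  have h_one : v * ∑' j, ‖c j‖ * 1 ^ j < 1 := by simpa only [one_pow, mul_one] using hv
  obtain ⟨a, b, ha0, ha1, hb1, hbR, h_lt⟩ := exists_Icc_forall_mul_lt_pow h_cont h_one hR s
  refine ⟨a, b, ha0, ha1, hb1, hbR, fun u hu w haw hwb => ?_⟩
  have h_majorant : ‖f w‖ ≤ ∑' j, ‖c j‖ * ‖w‖ ^ j :=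
    norm_le_tsum_norm_mul_norm_pow (hf w (hwb.trans_lt hbR))
  calc ‖u * f w‖ = ‖u‖ * ‖f w‖ := norm_mul u (f w)
    _ ≤ v * ∑' j, ‖c j‖ * ‖w‖ ^ j :=
      mul_le_mul hu h_majorant (norm_nonneg _) ((norm_nonneg u).trans hu)
    _ < ‖w‖ ^ s := h_lt ‖w‖ ⟨haw, hwb⟩

theorem zero_free_annulus_general (s : ℕ) (hR : 1 < R)
    (hf : ∀ w : 𝕜, ‖w‖ < R → HasSum (fun j => c j * w ^ j) (f w))
    {v : ℝ} (hv : v * ∑' j, ‖c j‖ < 1) :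
    ∃ a b : ℝ, 0 < a ∧ a < 1 ∧ 1 < b ∧ b < R ∧
      (∀ u : 𝕜, ‖u‖ ≤ v → ∀ w : 𝕜, a ≤ ‖w‖ → ‖w‖ ≤ b → ‖u * f w‖ < ‖w‖ ^ s) ∧
      (∀ u : 𝕜, ‖u‖ ≤ v → ∀ w : 𝕜, a ≤ ‖w‖ → ‖w‖ ≤ b → w ^ s - u * f w ≠ 0) ∧
      (∀ u : 𝕜, ‖u‖ ≤ v → ∀ ζ : 𝕜, ‖ζ‖ ≤ 1 → ζ ^ s - u * f ζ = 0 → ‖ζ‖ < a) := by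
  obtain ⟨a, b, ha0, ha1, hb1, hbR, h_lt⟩ := exists_annulus_norm_mul_lt_pow s hR hf hv
  have h_ne (u : 𝕜) (hu : ‖u‖ ≤ v) (w : 𝕜) (haw : a ≤ ‖w‖) (hwb : ‖w‖ ≤ b) :
      w ^ s - u * f w ≠ 0 := fun h_zero =>
    (h_lt u hu w haw hwb).ne (by rw [← sub_eq_zero.mp h_zero, norm_pow])
  exact ⟨a, b, ha0, ha1, hb1, hbR, h_lt, h_ne, fun u hu ζ hζ h_zero =>
    lt_of_not_ge fun haζ => h_ne u hu ζ haζ (hζ.trans hb1.le) h_zero⟩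

end PowerSeries

theorem tsum_measureReal_preimage_singleton {α β : Type*} [MeasurableSpace α]
    [MeasurableSpace β] [MeasurableSingletonClass β] [Countable β] (μ : Measure α)
    [IsFiniteMeasure μ] {f : α → β} (hf : Measurable f) :
    ∑' b, μ.real (f ⁻¹' {b}) = μ.real Set.univ := by
  have h_tsum : ∑' b, μ (f ⁻¹' {b}) = μ Set.univ := by
    simpa only [tsum_univ (fun b => μ (f ⁻¹' {b})), Set.preimage_univ] using
      tsum_measure_preimage_singleton (μ := μ) (Set.to_countable Set.univ)
        fun b _ => hf (measurableSet_singleton b)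
  simp only [measureReal_def]
  rw [← ENNReal.tsum_toReal_eq fun b => measure_ne_top μ _, h_tsum]

theorem tsum_norm_pgf_coeff_eq_one {Ω : Type*} [MeasureSpace Ω]
    [IsProbabilityMeasure (ℙ : Measure Ω)] {A : Ω → ℕ} (hmeas : Measurable A) :
    ∑' j : ℕ, ‖((ℙ {ω | A ω = j}).toReal : ℂ)‖ = 1 := by
  simp only [Complex.norm_of_nonneg ENNReal.toReal_nonneg]
  exact (tsum_measureReal_preimage_singleton ℙ hmeas).trans probReal_univ

/-- **Existence of a zero-free annulus.**  For every `v ∈ (0,1)` there are `0 < a < 1 < b < R`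
such that for all `|u| ≤ v` and all `w` with `a ≤ |w| ≤ b` one has `|u A(w)| < |w|^s`; hence
`w^s - u A(w) ≠ 0` on the annulus, and every zero `ζ` of `w^s - u A(w)` with `|ζ| ≤ 1`
satisfies `|ζ| < a`. -/
theorem zero_free_annulus
    {Ω : Type*} [MeasureSpace Ω] [IsProbabilityMeasure (ℙ : Measure Ω)]
    (s : ℕ) (hs : 0 < s)
    (A : Ω → ℕ)
    (hmeas : Measurable A)
    (hA0 : 0 < ℙ {ω | A ω = 0}) (hA0' : ℙ {ω | A ω = 0} < 1)
    (R : ℝ) (hR : 1 < R)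
    (hsum : ∀ z : ℂ, ‖z‖ < R →
      Summable fun j : ℕ => ((ℙ {ω | A ω = j}).toReal : ℂ) * z ^ j)
    (hanal : AnalyticOnNhd ℂ (pgf A) (Metric.ball 0 R))
    (v : ℝ) (hv : v ∈ Set.Ioo (0 : ℝ) 1) :
    ∃ a b : ℝ, 0 < a ∧ a < 1 ∧ 1 < b ∧ b < R ∧
      (∀ u : ℂ, ‖u‖ ≤ v → ∀ w : ℂ, a ≤ ‖w‖ → ‖w‖ ≤ b →
        ‖u * pgf A w‖ < ‖w‖ ^ s) ∧
      (∀ u : ℂ, ‖u‖ ≤ v → ∀ w : ℂ, a ≤ ‖w‖ → ‖w‖ ≤ b →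
        w ^ s - u * pgf A w ≠ 0) ∧
      (∀ u : ℂ, ‖u‖ ≤ v → ∀ ζ : ℂ, ‖ζ‖ ≤ 1 →
        ζ ^ s - u * pgf A ζ = 0 → ‖ζ‖ < a) := by
  refine zero_free_annulus_general s hR (fun w hw => (hsum w hw).hasSum) ?_
  simpa only [tsum_norm_pgf_coeff_eq_one hmeas, mul_one] using hv.2
end

section
/- Contour deformation across the branch cut: Let v ∈ (0,1) and let a, b satisfy 0 < a < 1 < b < R and |u'·A(w)| < |w|^s for all |u'| ≤ v and all a ≤ |w| ≤ b. Fix u ∈ (0, v) and z ∈ (a, 1), set k(w) = w^s − u·A(w), and let ζ_0, …, ζ_{s−1} be the zeros of k in |w| < 1 listed with multiplicity (all of which satisfy |ζ_k| < a). Then Σ_{k=0}^{s−1} Log((z − ζ_k)/(1 − ζ_k)) = (1/(2πi)) ∮_{|w|=b} Log((z − w)/(1 − w)) · (k'(w)/k(w)) dw − log(1 − u) + log k(z), where Log is the principal complex logarithm, log(1 − u) and log k(z) are real logarithms of the positive numbers 1 − u and k(z) = z^s − u·A(z) > 0, and the contour integral is over the positively oriented circle of radius b. -/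
/-!
The quotient `(x - w) / (y - w)` is a nonpositive real exactly when `w` lies on the segment from `x`
to `y`, so `L w = Log ((x - w) / (y - w))` is holomorphic off that segment, with
`L' w = 1 / (w - x) - 1 / (w - y)`, and tends to `0` at infinity.

Write `k w = (∏ j, (w - ζ j)) * g w` with `g` zero-free on a disk containing the segment and all the
`ζ j`, so that `k' / k = ∑ j, 1 / (w - ζ j) + h'`, where `h` is a primitive of `g' / g`.  In the
integral of `L * k' / k` over the boundary circle, each term `L w / (w - ζ j)` contributes `0`,
because the contour can be pushed to infinity, where the integrand is `o(1 / |w|)`.  Integration by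
parts and Cauchy's formula evaluate the integral of `L * h'` as `2πi (h y - h x)`.

It remains to compare `h y - h x` with the logarithms.  Along the segment, the function
`∑ j, Log ((t - ζ j) / (y - ζ j)) + h t - Log (k t)` has derivative zero, and no branch is crossed
as long as `k` maps the segment into the slit plane.

For `k w = w ^ s - u * A w` the cofactor `g` is given only on the unit disk; since `k` has no zeros
in `1 ≤ |w| ≤ b`, the quotient `k w / ∏ j, (w - ζ j)` continues `g` without zeros to `|w| ≤ b`.  The
segment condition holds because `|u * A t| < t ^ s` forces `k t` to have positive real part.
-/

open MeasureTheory ProbabilityTheory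

open Bornology Filter Metric Set Topology
open scoped Convex

lemma tendsto_sub_div_sub_cobounded {𝕜 : Type*} [NormedField 𝕜] (x y : 𝕜) :
    Tendsto (fun w => (w - x) / (w - y)) (cobounded 𝕜) (𝓝 1) := by
  have hinv : Tendsto (fun w => (w - y)⁻¹) (cobounded 𝕜) (𝓝 0) :=
    tendsto_inv₀_cobounded.comp (tendsto_sub_const_cobounded y)
  have hlim : Tendsto (fun w => 1 + (y - x) * (w - y)⁻¹) (cobounded 𝕜) (𝓝 1) := by
    simpa only [mul_zero, add_zero] using (hinv.const_mul (y - x)).const_add 1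
  refine hlim.congr' ?_
  filter_upwards [eventually_ne_cobounded y] with w hw
  have : w - y ≠ 0 := sub_ne_zero.2 hw
  field_simp
  ring

section BranchCut

variable {x y w : ℂ}

open scoped ComplexOrder in
lemma sub_div_sub_mem_slitPlane_iff :
    (x - w) / (y - w) ∈ Complex.slitPlane ↔ w ∉ [x -[ℝ] y] := by
  have hneg : (x - w) / (y - w) = -((w - x) / (y - w)) := by rw [← neg_div, neg_sub]
  rw [mem_segment_iff_sameRay, Complex.sameRay_iff_arg_div_eq_zero,
    Complex.arg_eq_zero_iff_zero_le, Complex.mem_slitPlane_iff_not_le_zero, hneg, neg_nonpos]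

lemma hasDerivAt_log_sub_div_sub (hw : w ∉ [x -[ℝ] y]) :
    HasDerivAt (fun w => Complex.log ((x - w) / (y - w))) ((w - x)⁻¹ - (w - y)⁻¹) w := by
  have hxw : x - w ≠ 0 := fun h => hw (sub_eq_zero.1 h ▸ left_mem_segment ℝ x y)
  have hyw : y - w ≠ 0 := fun h => hw (sub_eq_zero.1 h ▸ right_mem_segment ℝ x y)
  have hquot := ((hasDerivAt_id w).const_sub x).div ((hasDerivAt_id w).const_sub y) hyw
  refine (hquot.clog (sub_div_sub_mem_slitPlane_iff.2 hw)).congr_deriv ?_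
  rw [← neg_sub x w, ← neg_sub y w]
  simp only [id, Pi.div_apply]
  field_simp

lemma continuousOn_log_sub_div_sub {S : Set ℂ} (hS : Disjoint S [x -[ℝ] y]) :
    ContinuousOn (fun w => Complex.log ((x - w) / (y - w))) S := fun _ hw =>
  (hasDerivAt_log_sub_div_sub (hS.notMem_of_mem_left hw)).continuousAt.continuousWithinAt

lemma tendsto_log_sub_div_sub_cobounded (x y : ℂ) :
    Tendsto (fun w => Complex.log ((x - w) / (y - w))) (cobounded ℂ) (𝓝 0) := by
  have hratio : Tendsto (fun w => (x - w) / (y - w)) (cobounded ℂ) (𝓝 1) :=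
    (tendsto_sub_div_sub_cobounded x y).congr fun w => by rw [← neg_div_neg_eq, neg_sub, neg_sub]
  simpa only [Complex.log_one] using hratio.clog Complex.one_mem_slitPlane

end BranchCut

section CircleIntegral

variable {c x y ζ : ℂ} {b : ℝ}

lemma circleIntegral_eq_zero_of_tendsto_cobounded {E : Type*} [NormedAddCommGroup E]
    [NormedSpace ℂ E] {f : ℂ → E} (hb : 0 < b) (hcont : ContinuousOn f (ball c b)ᶜ)
    (hdiff : ∀ w ∈ (closedBall c b)ᶜ, DifferentiableAt ℂ f w)
    (hlim : Tendsto (fun w => (w - c) • f w) (cobounded ℂ) (𝓝 0)) :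
    (∮ w in C(c, b), f w) = 0 := by
  have hexpand : ∀ r, b ≤ r → (∮ w in C(c, r), f w) = ∮ w in C(c, b), f w := fun r hr =>
    Complex.circleIntegral_eq_of_differentiable_on_annulus_off_countable hb hr countable_empty
      (hcont.mono fun _ hw => hw.2) fun w hw => hdiff w hw.1.2
  have hsmall : ∀ ε > 0, ‖∮ w in C(c, b), f w‖ ≤ 2 * Real.pi * ε := by
    intro ε hε
    obtain ⟨r₀, -, hr₀⟩ := (hasBasis_cobounded_compl_ball c).eventually_iff.1
      (hlim.norm.eventually_le_const (by simpa only [norm_zero] using hε))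
    obtain ⟨r, hbr, hr₀r⟩ : ∃ r, b ≤ r ∧ r₀ ≤ r := ⟨max b r₀, le_max_left .., le_max_right ..⟩
    have hr : 0 < r := hb.trans_le hbr
    have hbound : ∀ w ∈ sphere c r, ‖f w‖ ≤ ε / r := by
      intro w hw
      have hnorm : ‖w - c‖ = r := mem_sphere_iff_norm.1 hw
      have := hr₀ (x := w) (by simpa only [mem_compl_iff, mem_ball_iff_norm, hnorm, not_lt])
      rw [norm_smul, hnorm] at this
      rwa [le_div_iff₀' hr]
    calc ‖∮ w in C(c, b), f w‖ = ‖∮ w in C(c, r), f w‖ := by rw [hexpand r hbr]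
      _ ≤ 2 * Real.pi * r * (ε / r) := circleIntegral.norm_integral_le_of_norm_le_const hr.le hbound
      _ = 2 * Real.pi * ε := by field_simp
  have hlim₀ : Tendsto (fun ε : ℝ => 2 * Real.pi * ε) (𝓝[>] 0) (𝓝 0) := by
    have : Tendsto (fun ε : ℝ => 2 * Real.pi * ε) (𝓝 0) (𝓝 (2 * Real.pi * 0)) :=
      tendsto_id.const_mul _
    simpa only [mul_zero] using this.mono_left nhdsWithin_le_nhds
  exact norm_le_zero_iff.1 (ge_of_tendsto hlim₀ (eventually_mem_nhdsWithin.mono hsmall))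

lemma circleIntegral_log_sub_div_sub_mul_inv_sub (hx : x ∈ ball c b) (hy : y ∈ ball c b)
    (hζ : ζ ∈ ball c b) :
    (∮ w in C(c, b), Complex.log ((x - w) / (y - w)) * (w - ζ)⁻¹) = 0 := by
  have hdiff : ∀ w ∈ (ball c b)ᶜ,
      DifferentiableAt ℂ (fun w => Complex.log ((x - w) / (y - w)) * (w - ζ)⁻¹) w := by
    intro w hw
    have hseg : w ∉ [x -[ℝ] y] := fun h => hw ((convex_ball c b).segment_subset hx hy h)
    have hwζ : w - ζ ≠ 0 := sub_ne_zero.2 (ne_of_mem_of_not_mem hζ hw).symm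
    exact (hasDerivAt_log_sub_div_sub hseg).differentiableAt.mul (by fun_prop (disch := exact hwζ))
  refine circleIntegral_eq_zero_of_tendsto_cobounded (pos_of_mem_ball hx)
    (fun w hw => (hdiff w hw).continuousAt.continuousWithinAt)
    (fun w hw => hdiff w (compl_subset_compl.2 ball_subset_closedBall hw)) ?_
  simpa only [zero_mul, smul_eq_mul, mul_left_comm, div_eq_mul_inv] using
    (tendsto_log_sub_div_sub_cobounded x y).mul (tendsto_sub_div_sub_cobounded c ζ)

lemma circleIntegral_mul_eq_neg_of_hasDerivAt {f f' h h' : ℂ → ℂ} (hb : 0 ≤ b)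
    (hf : ∀ w ∈ sphere c b, HasDerivAt f (f' w) w) (hh : ∀ w ∈ sphere c b, HasDerivAt h (h' w) w)
    (hf' : ContinuousOn f' (sphere c b)) (hh' : ContinuousOn h' (sphere c b)) :
    (∮ w in C(c, b), f w * h' w) = -∮ w in C(c, b), f' w * h w := by
  have hfc : ContinuousOn f (sphere c b) := HasDerivAt.continuousOn hf
  have hhc : ContinuousOn h (sphere c b) := HasDerivAt.continuousOn hh
  have hprod : (∮ w in C(c, b), (f' w * h w + f w * h' w)) = 0 :=
    circleIntegral.integral_eq_zero_of_hasDerivWithinAt hb fun w hw =>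
      ((hf w hw).mul (hh w hw)).hasDerivWithinAt
  rw [circleIntegral.integral_add (f := fun w => f' w * h w) (g := fun w => f w * h' w)
    ((hf'.mul hhc).circleIntegrable hb) ((hfc.mul hh').circleIntegrable hb)] at hprod
  exact eq_neg_of_add_eq_zero_right hprod

lemma circleIntegral_log_sub_div_sub_mul_deriv {h : ℂ → ℂ} (hx : x ∈ ball c b)
    (hy : y ∈ ball c b) (hh : AnalyticOnNhd ℂ h (closedBall c b)) :
    (∮ w in C(c, b), Complex.log ((x - w) / (y - w)) * deriv h w)
      = 2 * Real.pi * Complex.I * (h y - h x) := by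
  have hb : 0 ≤ b := (pos_of_mem_ball hx).le
  have hhs : AnalyticOnNhd ℂ h (sphere c b) := hh.mono sphere_subset_closedBall
  have hinv : ∀ t ∈ ball c b, ContinuousOn (fun w => (w - t)⁻¹) (sphere c b) := fun t ht =>
    ContinuousOn.inv₀ (by fun_prop) fun w hw =>
      sub_ne_zero.2 (sphere_disjoint_ball.ne_of_mem hw ht)
  have hint : ∀ t ∈ ball c b, CircleIntegrable (fun w => (w - t)⁻¹ • h w) c b := fun t ht =>
    ((hinv t ht).smul hhs.continuousOn).circleIntegrable hb
  have hseg : ∀ w ∈ sphere c b, w ∉ [x -[ℝ] y] := fun w hw hws =>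
    sphere_disjoint_ball.notMem_of_mem_left hw ((convex_ball c b).segment_subset hx hy hws)
  have hcauchy : ∀ t ∈ ball c b,
      (∮ w in C(c, b), (w - t)⁻¹ • h w) = (2 * Real.pi * Complex.I : ℂ) • h t := fun t ht =>
    hh.differentiableOn.circleIntegral_sub_inv_smul ht
  calc (∮ w in C(c, b), Complex.log ((x - w) / (y - w)) * deriv h w)
      = -∮ w in C(c, b), ((w - x)⁻¹ - (w - y)⁻¹) * h w :=
        circleIntegral_mul_eq_neg_of_hasDerivAt hb
          (fun w hw => hasDerivAt_log_sub_div_sub (hseg w hw))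
          (fun w hw => (hhs w hw).differentiableAt.hasDerivAt)
          ((hinv x hx).sub (hinv y hy)) hhs.deriv.continuousOn
    _ = -((∮ w in C(c, b), (w - x)⁻¹ • h w) - ∮ w in C(c, b), (w - y)⁻¹ • h w) := by
        rw [← circleIntegral.integral_sub (hint x hx) (hint y hy)]
        simp only [smul_eq_mul, sub_mul]
    _ = 2 * Real.pi * Complex.I * (h y - h x) := by
        rw [hcauchy x hx, hcauchy y hy, smul_eq_mul, smul_eq_mul]
        ring

end CircleIntegral

lemma exists_primitive_of_analyticOnNhd_closedBall {E : Type*} [NormedAddCommGroup E]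
    [NormedSpace ℂ E] [CompleteSpace E] {c : ℂ} {b : ℝ} {f : ℂ → E} (hb : 0 ≤ b)
    (hf : AnalyticOnNhd ℂ f (closedBall c b)) :
    ∃ h : ℂ → E, AnalyticOnNhd ℂ h (closedBall c b) ∧ EqOn (deriv h) f (closedBall c b) := by
  obtain ⟨ε, hε, hball⟩ := (isCompact_closedBall c b).exists_thickening_subset_open
    (isOpen_analyticAt ℂ f) hf
  rw [thickening_closedBall hε hb] at hball
  have hfd : DifferentiableOn ℂ f (ball c (ε + b)) := fun w hw =>
    (hball hw).differentiableAt.differentiableWithinAt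
  obtain ⟨h, hh⟩ := hfd.isExactOn_ball
  have hsub : closedBall c b ⊆ ball c (ε + b) := closedBall_subset_ball (by linarith)
  have hhd : DifferentiableOn ℂ h (ball c (ε + b)) := fun w hw =>
    (hh w hw).differentiableAt.differentiableWithinAt
  exact ⟨h, (hhd.analyticOnNhd isOpen_ball).mono hsub, fun w hw => (hh w (hsub hw)).deriv⟩

section Factorization

lemma exists_analyticOnNhd_eq_mul {𝕜 : Type*} [NontriviallyNormedField 𝕜] {k P g : 𝕜 → 𝕜}
    {S U : Set 𝕜} (hU : IsOpen U) (hk : AnalyticOnNhd 𝕜 k S) (hk₀ : ∀ w ∈ S \ U, k w ≠ 0)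
    (hP : AnalyticOnNhd 𝕜 P S) (hPU : ∀ w, P w = 0 → w ∈ U)
    (hg : AnalyticOnNhd 𝕜 g U) (hg₀ : ∀ w ∈ U, g w ≠ 0) (hfac : ∀ w ∈ U, k w = P w * g w) :
    ∃ G : 𝕜 → 𝕜, AnalyticOnNhd 𝕜 G S ∧ (∀ w ∈ S, G w ≠ 0) ∧ ∀ w, k w = P w * G w := by
  classical
  set G : 𝕜 → 𝕜 := fun w => if P w = 0 then g w else k w / P w with hG
  have hGg : EqOn G g U := by
    intro w hw
    rcases eq_or_ne (P w) 0 with hPw | hPw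
    · exact if_pos hPw
    · simp only [hG, if_neg hPw, hfac w hw, mul_div_cancel_left₀ _ hPw]
  refine ⟨G, fun w hw => ?_, fun w hw => ?_, fun w => ?_⟩
  · rcases eq_or_ne (P w) 0 with hPw | hPw
    · exact (hg w (hPU w hPw)).congr (hGg.eventuallyEq_of_mem (hU.mem_nhds (hPU w hPw))).symm
    · refine ((hk w hw).div (hP w hw) hPw).congr ?_
      filter_upwards [(hP w hw).continuousAt.eventually_ne hPw] with t ht
      exact (if_neg ht).symm
  · by_cases hwU : w ∈ U
    · exact hGg hwU ▸ hg₀ w hwU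
    · have hPw : P w ≠ 0 := fun h => hwU (hPU w h)
      simp only [hG, if_neg hPw]
      exact div_ne_zero (hk₀ w ⟨hw, hwU⟩) hPw
  · rcases eq_or_ne (P w) 0 with hPw | hPw
    · rw [hGg (hPU w hPw), hfac w (hPU w hPw)]
    · simp only [hG, if_neg hPw, mul_div_cancel₀ _ hPw]

lemma logDeriv_prod_sub_mul {𝕜 ι : Type*} [NontriviallyNormedField 𝕜] [Fintype ι] {g : 𝕜 → 𝕜}
    {ζ : ι → 𝕜} {w : 𝕜} (hζ : ∀ j, w ≠ ζ j) (hg₀ : g w ≠ 0) (hg : DifferentiableAt 𝕜 g w) :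
    logDeriv (fun w => (∏ j, (w - ζ j)) * g w) w = ∑ j, (w - ζ j)⁻¹ + logDeriv g w := by
  have hsub : ∀ j, w - ζ j ≠ 0 := fun j => sub_ne_zero.2 (hζ j)
  rw [logDeriv_mul (f := fun w => ∏ j, (w - ζ j)) w (Finset.prod_ne_zero_iff.2 fun j _ => hsub j)
      hg₀ (by fun_prop) hg,
    logDeriv_prod (f := fun j w => w - ζ j) (fun j _ => hsub j) (fun j _ => by fun_prop)]
  simp only [logDeriv_apply, deriv_sub_const, deriv_id'', one_div]

end Factorization

section SumLog

variable {ι : Type*} [Fintype ι] {c x y : ℂ} {b : ℝ} {k g h : ℂ → ℂ} {ζ : ι → ℂ}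

lemma hasDerivAt_sum_log_sub_div_sub {t : ℂ} (hζ : ∀ j, ζ j ∉ [t -[ℝ] y]) :
    HasDerivAt (fun t => ∑ j, Complex.log ((t - ζ j) / (y - ζ j))) (∑ j, (t - ζ j)⁻¹) t := by
  refine HasDerivAt.fun_sum fun j _ => ?_
  have hy : y - ζ j ≠ 0 := fun h => hζ j (sub_eq_zero.1 h ▸ right_mem_segment ℝ t y)
  have hquot := ((hasDerivAt_id t).sub_const (ζ j)).div_const (y - ζ j)
  refine (hquot.clog (sub_div_sub_mem_slitPlane_iff.2 (hζ j))).congr_deriv ?_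
  simp only [id]
  field_simp

lemma sum_log_sub_div_sub_eq_of_deriv_eq_logDeriv
    (hg : ∀ t ∈ [x -[ℝ] y], DifferentiableAt ℂ g t)
    (hh : ∀ t ∈ [x -[ℝ] y], HasDerivAt h (logDeriv g t) t)
    (hfac : ∀ w, k w = (∏ j, (w - ζ j)) * g w)
    (hk : ∀ t ∈ [x -[ℝ] y], k t ∈ Complex.slitPlane) :
    ∑ j, Complex.log ((x - ζ j) / (y - ζ j))
      = h y - h x - Complex.log (k y) + Complex.log (k x) := by
  have hk₀ : ∀ t ∈ [x -[ℝ] y], (∏ j, (t - ζ j)) * g t ≠ 0 := fun t ht =>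
    hfac t ▸ Complex.slitPlane_ne_zero (hk t ht)
  have hζ : ∀ t ∈ [x -[ℝ] y], ∀ j, t ≠ ζ j := fun t ht j =>
    sub_ne_zero.1 (Finset.prod_ne_zero_iff.1 (left_ne_zero_of_mul (hk₀ t ht)) j (Finset.mem_univ j))
  have hkd : ∀ t ∈ [x -[ℝ] y],
      HasDerivAt (fun t => Complex.log (k t)) (∑ j, (t - ζ j)⁻¹ + logDeriv g t) t := by
    intro t ht
    have hgt := hg t ht
    have hkt : DifferentiableAt ℂ k t := by
      rw [funext hfac]
      fun_prop
    rw [← logDeriv_prod_sub_mul (hζ t ht) (right_ne_zero_of_mul (hk₀ t ht)) hgt, ← funext hfac]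
    exact hkt.hasDerivAt.clog (hk t ht)
  set D : ℂ → ℂ := fun t => ∑ j, Complex.log ((t - ζ j) / (y - ζ j)) + h t - Complex.log (k t)
    with hD
  have hDd : ∀ t ∈ [x -[ℝ] y], HasDerivWithinAt D 0 [x -[ℝ] y] t := by
    intro t ht
    have hsub : [t -[ℝ] y] ⊆ [x -[ℝ] y] :=
      (convex_segment x y).segment_subset ht (right_mem_segment ℝ x y)
    have hsum := hasDerivAt_sum_log_sub_div_sub fun j hj => hζ (ζ j) (hsub hj) j rfl
    refine (((hsum.add (hh t ht)).sub (hkd t ht)).congr_deriv ?_).hasDerivWithinAt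
    ring
  have hconst : D x = D y := by
    have := (convex_segment x y).norm_image_sub_le_of_norm_hasDerivWithin_le (C := 0) hDd
      (fun _ _ => norm_zero.le) (right_mem_segment ℝ x y) (left_mem_segment ℝ x y)
    rwa [zero_mul, norm_le_zero_iff, sub_eq_zero] at this
  have hDy : D y = h y - Complex.log (k y) := by
    have : ∀ j, y - ζ j ≠ 0 := fun j => sub_ne_zero.2 (hζ y (right_mem_segment ℝ x y) j)
    simp only [hD, div_self (this _), Complex.log_one, Finset.sum_const_zero, zero_add]
  linear_combination hconst + hDy

lemma circleIntegral_log_sub_div_sub_mul_logDeriv (hx : x ∈ ball c b) (hy : y ∈ ball c b)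
    (hζ : ∀ j, ζ j ∈ ball c b) (hg₀ : ∀ w ∈ closedBall c b, g w ≠ 0)
    (hg : AnalyticOnNhd ℂ g (closedBall c b)) (hh : AnalyticOnNhd ℂ h (closedBall c b))
    (hhg : EqOn (deriv h) (logDeriv g) (closedBall c b))
    (hfac : ∀ w, k w = (∏ j, (w - ζ j)) * g w) :
    (∮ w in C(c, b), Complex.log ((x - w) / (y - w)) * logDeriv k w)
      = 2 * Real.pi * Complex.I * (h y - h x) := by
  have hb : 0 ≤ b := (pos_of_mem_ball hx).le
  have hζs : ∀ w ∈ sphere c b, ∀ j, w ≠ ζ j := fun w hw j =>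
    sphere_disjoint_ball.ne_of_mem hw (hζ j)
  have hlog : ContinuousOn (fun w => Complex.log ((x - w) / (y - w))) (sphere c b) :=
    continuousOn_log_sub_div_sub
      (sphere_disjoint_ball.mono_right ((convex_ball c b).segment_subset hx hy))
  have hpole : ∀ j ∈ Finset.univ, CircleIntegrable
      (fun w => Complex.log ((x - w) / (y - w)) * (w - ζ j)⁻¹) c b := fun j _ =>
    (hlog.mul (ContinuousOn.inv₀ (by fun_prop) fun w hw =>
      sub_ne_zero.2 (hζs w hw j))).circleIntegrable hb
  have hregular : CircleIntegrable (fun w => Complex.log ((x - w) / (y - w)) * deriv h w) c b :=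
    (hlog.mul (hh.deriv.continuousOn.mono sphere_subset_closedBall)).circleIntegrable hb
  have hsplit : EqOn (fun w => Complex.log ((x - w) / (y - w)) * logDeriv k w)
      (fun w => ∑ j, Complex.log ((x - w) / (y - w)) * (w - ζ j)⁻¹
        + Complex.log ((x - w) / (y - w)) * deriv h w) (sphere c b) := by
    intro w hw
    have hw' := sphere_subset_closedBall hw
    simp only [funext hfac, hhg hw', mul_add, Finset.mul_sum,
      logDeriv_prod_sub_mul (hζs w hw) (hg₀ w hw') (hg w hw').differentiableAt]
  rw [circleIntegral.integral_congr hb hsplit,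
    circleIntegral.integral_add (CircleIntegrable.fun_sum _ hpole) hregular,
    circleIntegral.integral_fun_sum hpole,
    Finset.sum_eq_zero fun j _ => circleIntegral_log_sub_div_sub_mul_inv_sub hx hy (hζ j), zero_add,
    circleIntegral_log_sub_div_sub_mul_deriv hx hy hh]

theorem sum_log_sub_div_sub_eq_circleIntegral (hx : x ∈ ball c b) (hy : y ∈ ball c b)
    (hζ : ∀ j, ζ j ∈ ball c b) (hg : AnalyticOnNhd ℂ g (closedBall c b))
    (hg₀ : ∀ w ∈ closedBall c b, g w ≠ 0) (hfac : ∀ w, k w = (∏ j, (w - ζ j)) * g w)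
    (hk : ∀ t ∈ [x -[ℝ] y], k t ∈ Complex.slitPlane) :
    ∑ j, Complex.log ((x - ζ j) / (y - ζ j))
      = (2 * Real.pi * Complex.I)⁻¹ *
          (∮ w in C(c, b), Complex.log ((x - w) / (y - w)) * logDeriv k w)
        - Complex.log (k y) + Complex.log (k x) := by
  have hseg : [x -[ℝ] y] ⊆ closedBall c b :=
    ((convex_ball c b).segment_subset hx hy).trans ball_subset_closedBall
  obtain ⟨h, hh, hhg⟩ := exists_primitive_of_analyticOnNhd_closedBall (pos_of_mem_ball hx).le
    (f := logDeriv g) fun w hw => (hg w hw).deriv.div (hg w hw) (hg₀ w hw)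
  rw [circleIntegral_log_sub_div_sub_mul_logDeriv hx hy hζ hg₀ hg hh hhg hfac,
    inv_mul_cancel_left₀ Complex.two_pi_I_ne_zero]
  exact sum_log_sub_div_sub_eq_of_deriv_eq_logDeriv
    (fun t ht => (hg t (hseg ht)).differentiableAt)
    (fun t ht => hhg (hseg ht) ▸ (hh t (hseg ht)).differentiableAt.hasDerivAt) hfac hk

end SumLog

lemma segment_ofReal {x y : ℝ} (hxy : x ≤ y) : [(x : ℂ) -[ℝ] y] = Complex.ofReal '' Icc x y := by
  rw [← segment_eq_Icc hxy]
  exact (image_segment ℝ Complex.ofRealCLM.toAffineMap x y).symm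

lemma ofReal_sub_mem_slitPlane {r : ℝ} {w : ℂ} (h : ‖w‖ < r) :
    (r : ℂ) - w ∈ Complex.slitPlane := by
  refine Or.inl ?_
  rw [Complex.sub_re, Complex.ofReal_re]
  linarith [Complex.re_le_norm w]

lemma pgf_one {Ω : Type*} [MeasureSpace Ω] [IsProbabilityMeasure (ℙ : Measure Ω)] {A : Ω → ℕ}
    (hA : Measurable A) : pgf A 1 = 1 := by
  have hmass : ∑' j, ℙ {ω | A ω = j} = 1 := by
    rw [← tsum_univ]
    refine (tsum_measure_preimage_singleton countable_univ fun j _ =>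
      hA (measurableSet_singleton j)).trans ?_
    rw [preimage_univ, measure_univ]
  simp only [pgf, one_pow, mul_one]
  rw [← Complex.ofReal_tsum, ← ENNReal.tsum_toReal_eq fun _ => measure_ne_top _ _, hmass,
    ENNReal.toReal_one, Complex.ofReal_one]

theorem contour_deformation_branch_cut_general {s : ℕ} {ι : Type*} [Fintype ι] {F g : ℂ → ℂ}
    {ζ : ι → ℂ} {b z : ℝ} {u : ℂ} (hz₀ : 0 ≤ z) (hz₁ : z ≤ 1) (hb : 1 < b)
    (hF : AnalyticOnNhd ℂ F (closedBall 0 b))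
    (hannulus : ∀ w : ℂ, z ≤ ‖w‖ → ‖w‖ ≤ b → ‖u * F w‖ < ‖w‖ ^ s)
    (hζ : ∀ j, ‖ζ j‖ < 1) (hg : AnalyticOnNhd ℂ g (ball 0 1)) (hg₀ : ∀ w ∈ ball 0 1, g w ≠ 0)
    (hfac : ∀ w ∈ ball 0 1, w ^ s - u * F w = (∏ j, (w - ζ j)) * g w) :
    ∑ j, Complex.log ((z - ζ j) / (1 - ζ j))
      = (2 * Real.pi * Complex.I)⁻¹ *
          (∮ w in C(0, b), Complex.log ((z - w) / (1 - w)) *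
            logDeriv (fun w => w ^ s - u * F w) w)
        - Complex.log (1 - u * F 1) + Complex.log (z ^ s - u * F z) := by
  have hk : AnalyticOnNhd ℂ (fun w => w ^ s - u * F w) (closedBall 0 b) := fun w hw =>
    (analyticAt_id.pow s).sub (analyticAt_const.mul (hF w hw))
  have hk₀ : ∀ w ∈ closedBall 0 b \ ball 0 1, w ^ s - u * F w ≠ 0 := by
    intro w hw h
    have hw₁ : 1 ≤ ‖w‖ := by simpa using hw.2
    have := hannulus w (hz₁.trans hw₁) (by simpa using hw.1)
    rw [← sub_eq_zero.1 h, norm_pow] at this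
    exact this.false
  have hP₀ : ∀ w, ∏ j, (w - ζ j) = 0 → w ∈ ball 0 1 := by
    intro w hw
    obtain ⟨j, -, hj⟩ := Finset.prod_eq_zero_iff.1 hw
    simpa only [sub_eq_zero.1 hj, mem_ball_zero_iff] using hζ j
  obtain ⟨G, hG, hG₀, hkG⟩ := exists_analyticOnNhd_eq_mul isOpen_ball hk hk₀
    (fun w _ => by fun_prop) hP₀ hg hg₀ hfac
  have hslit : ∀ t ∈ [(z : ℂ) -[ℝ] 1], t ^ s - u * F t ∈ Complex.slitPlane := by
    intro t ht
    rw [← Complex.ofReal_one, segment_ofReal hz₁] at ht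
    obtain ⟨r, hr, rfl⟩ := ht
    have hr₀ : ‖(r : ℂ)‖ = r := Complex.norm_of_nonneg (hz₀.trans hr.1)
    rw [← Complex.ofReal_pow]
    refine ofReal_sub_mem_slitPlane ?_
    simpa only [hr₀] using hannulus r (hr.1.trans_eq hr₀.symm) (hr₀.trans_le (hr.2.trans hb.le))
  have hzb : (z : ℂ) ∈ ball 0 b := by
    rw [mem_ball_zero_iff, Complex.norm_of_nonneg hz₀]
    exact hz₁.trans_lt hb
  have h1b : (1 : ℂ) ∈ ball 0 b := by rwa [mem_ball_zero_iff, norm_one]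
  have hζb : ∀ j, ζ j ∈ ball 0 b := fun j => mem_ball_zero_iff.2 ((hζ j).trans hb)
  simpa only [one_pow] using sum_log_sub_div_sub_eq_circleIntegral hzb h1b hζb hG hG₀ hkG hslit

/-- **Contour deformation across the branch cut.**  Let `v ∈ (0,1)`, `0 < a < 1 < b < R` with
`|u' A(w)| < |w|^s` for all `|u'| ≤ v` and `a ≤ |w| ≤ b`.  Fix `u ∈ (0,v)`, `z ∈ (a,1)`, set
`k(w) = w^s - u A(w)`, and let `ζ 0, …, ζ (s-1)` be the zeros of `k` in `|w| < 1` listed with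
multiplicity (all with `|ζ j| < a`), encoded by the factorization `k w = (∏ j, (w - ζ j)) * g w`
on `|w| ≤ 1` with `g` analytic and zero-free there.  Then
`∑_j Log ((z - ζ j)/(1 - ζ j))
  = (2πi)⁻¹ ∮_{|w|=b} Log ((z - w)/(1 - w)) k'(w)/k(w) dw − log (1-u) + log (k z)`,
where the logarithms of the positive numbers `1 - u` and `k z` are principal (= real) logs. -/
theorem contour_deformation_branch_cut
    {Ω : Type*} [MeasureSpace Ω] [IsProbabilityMeasure (ℙ : Measure Ω)]
    (s : ℕ) (hs : 0 < s)
    (A : Ω → ℕ)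
    (hmeas : Measurable A)
    (hA0 : 0 < ℙ {ω | A ω = 0}) (hA0' : ℙ {ω | A ω = 0} < 1)
    (R : ℝ) (hR : 1 < R)
    (hsum : ∀ z : ℂ, ‖z‖ < R →
      Summable fun j : ℕ => ((ℙ {ω | A ω = j}).toReal : ℂ) * z ^ j)
    (hanal : AnalyticOnNhd ℂ (pgf A) (Metric.ball 0 R))
    (v : ℝ) (hv : v ∈ Set.Ioo (0 : ℝ) 1)
    (a b : ℝ) (ha : 0 < a) (ha1 : a < 1) (hb1 : 1 < b) (hbR : b < R)
    (hannulus : ∀ u' : ℂ, ‖u'‖ ≤ v → ∀ w : ℂ, a ≤ ‖w‖ → ‖w‖ ≤ b →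
      ‖u' * pgf A w‖ < ‖w‖ ^ s)
    (u : ℝ) (hu : u ∈ Set.Ioo 0 v)
    (z : ℝ) (hz : z ∈ Set.Ioo a 1)
    (ζ : Fin s → ℂ) (hζ : ∀ j, ‖ζ j‖ < a)
    (g : ℂ → ℂ) (hg : AnalyticOnNhd ℂ g (Metric.closedBall 0 1))
    (hgne : ∀ w ∈ Metric.closedBall (0 : ℂ) 1, g w ≠ 0)
    (hfac : ∀ w ∈ Metric.closedBall (0 : ℂ) 1,
      w ^ s - (u : ℂ) * pgf A w = (∏ j, (w - ζ j)) * g w) :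
    ∑ j, Complex.log (((z : ℂ) - ζ j) / (1 - ζ j))
      = (2 * Real.pi * Complex.I)⁻¹ *
          (∮ w in C(0, b), Complex.log (((z : ℂ) - w) / (1 - w)) *
            (deriv (fun w => w ^ s - (u : ℂ) * pgf A w) w / (w ^ s - (u : ℂ) * pgf A w)))
        - Complex.log (1 - (u : ℂ))
        + Complex.log ((z : ℂ) ^ s - (u : ℂ) * pgf A (z : ℂ)) := by
  simpa only [pgf_one hmeas, mul_one, logDeriv_apply] using contour_deformation_branch_cut_general
    (ha.trans hz.1).le hz.2.le hb1 (hanal.mono (closedBall_subset_ball hbR))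
    (fun w hw => hannulus u ((Complex.norm_of_nonneg hu.1.le).trans_le hu.2.le) w
      (hz.1.le.trans hw))
    (fun j => (hζ j).trans ha1) (hg.mono ball_subset_closedBall)
    (fun w hw => hgne w (ball_subset_closedBall hw))
    (fun w hw => hfac w (ball_subset_closedBall hw))
end

section
/- Vanishing contour integral: For all real numbers z, b with 0 < z < 1 < b, ∮_{|w|=b} (1/w) · Log((z − w)/(1 − w)) dw = 0, where Log is the principal branch of the complex logarithm and the integral is over the positively oriented circle of radius b centered at 0. -/
/-!
On `|w| = b` the quotient `(a - w) / (c - w)` equals `(1 - a u) / (1 - c u)` with `u = w⁻¹`. For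
`|u| ≤ b⁻¹` both factors have positive real part, so the principal logarithm of the quotient is
holomorphic in `u` there. The form `dw / (i w)` is the angular measure, which `w ↦ w⁻¹` carries to
the one on `|u| = b⁻¹`, hence the mean value property gives `2πi` times the value at `u = 0`,
that is at `w = ∞`, which is `Log 1 = 0`.
-/

open Complex Metric
open scoped Real

lemma circleAverage_comp_inv {E : Type*} [NormedAddCommGroup E] [NormedSpace ℝ E]
    (f : ℂ → E) (R : ℝ) :
    Real.circleAverage (fun w ↦ f w⁻¹) 0 R = Real.circleAverage f 0 R⁻¹ := by
  rw [Real.circleAverage_eq_circleAverage_zero_one,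
    Real.circleAverage_eq_circleAverage_zero_one (f := f), ← Real.circleAverage_zero_one_congr_inv]
  simp only [mul_inv, inv_inv, add_zero, ofReal_inv]

lemma circleIntegral_inv_smul_comp_inv {E : Type*} [NormedAddCommGroup E] [NormedSpace ℂ E]
    [CompleteSpace E] {f : ℂ → E} {R : ℝ} (hR : R ≠ 0)
    (hf : DiffContOnCl ℂ f (ball 0 |R⁻¹|)) :
    (∮ w in C(0, R), w⁻¹ • f w⁻¹) = (2 * π * I : ℂ) • f 0 := by
  have average_eq : Real.circleAverage (fun w ↦ f w⁻¹) 0 R = f 0 :=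
    (circleAverage_comp_inv f R).trans hf.circleAverage
  rw [Real.circleAverage_eq_circleIntegral hR, inv_smul_eq_iff₀ two_pi_I_ne_zero] at average_eq
  simpa only [sub_zero] using average_eq

lemma div_mem_slitPlane_of_re_pos {p q : ℂ} (hp : 0 < p.re) (hq : 0 < q.re) :
    p / q ∈ slitPlane := by
  rw [mem_slitPlane_iff_not_le_zero, Complex.le_def]
  rintro ⟨re_nonpos, im_eq_zero⟩
  have q_ne_zero : q ≠ 0 := by
    rintro rfl
    exact lt_irrefl _ hq
  have re_eq : p.re = (p / q).re * q.re := by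
    conv_lhs => rw [← div_mul_cancel₀ p q_ne_zero, mul_re, im_eq_zero]
    simp only [zero_im, zero_mul, sub_zero]
  exact hp.not_ge (re_eq ▸ mul_nonpos_of_nonpos_of_nonneg re_nonpos hq.le)

lemma one_sub_re_pos_of_norm_lt_one {x : ℂ} (hx : ‖x‖ < 1) : 0 < (1 - x).re := by
  simpa only [sub_re, one_re, sub_pos] using (re_le_norm x).trans_lt hx

lemma norm_mul_lt_one_of_norm_le_inv {A : Type*} [NonUnitalSeminormedRing A] {a u : A} {b : ℝ}
    (ha : ‖a‖ < b) (hu : ‖u‖ ≤ b⁻¹) : ‖a * u‖ < 1 := by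
  have b_pos : 0 < b := (norm_nonneg a).trans_lt ha
  calc ‖a * u‖ ≤ ‖a‖ * ‖u‖ := norm_mul_le a u
    _ ≤ ‖a‖ * b⁻¹ := by gcongr
    _ < b * b⁻¹ := by gcongr
    _ = 1 := mul_inv_cancel₀ b_pos.ne'

lemma differentiableOn_log_one_sub_mul_div {a c : ℂ} {b : ℝ} (ha : ‖a‖ < b) (hc : ‖c‖ < b) :
    DifferentiableOn ℂ (fun u ↦ log ((1 - a * u) / (1 - c * u))) (closedBall 0 b⁻¹) := by
  have re_pos {d u : ℂ} (hd : ‖d‖ < b) (hu : u ∈ closedBall 0 b⁻¹) : 0 < (1 - d * u).re :=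
    one_sub_re_pos_of_norm_lt_one
      (norm_mul_lt_one_of_norm_le_inv hd (mem_closedBall_zero_iff.mp hu))
  refine DifferentiableOn.clog (.div (by fun_prop) (by fun_prop) fun u hu eq_zero ↦ ?_)
    fun u hu ↦ div_mem_slitPlane_of_re_pos (re_pos ha hu) (re_pos hc hu)
  simpa only [eq_zero, zero_re, lt_irrefl] using re_pos hc hu

lemma sub_div_sub_eq_one_sub_mul_inv {K : Type*} [Field K] {w : K} (hw : w ≠ 0) (a c : K) :
    (a - w) / (c - w) = (1 - a * w⁻¹) / (1 - c * w⁻¹) := by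
  rw [← mul_div_mul_left (1 - a * w⁻¹) (1 - c * w⁻¹) (neg_ne_zero.mpr hw)]
  congr 1 <;> field_simp <;> ring

theorem vanishing_contour_integral_general {a c : ℂ} {b : ℝ} (ha : ‖a‖ < b) (hc : ‖c‖ < b) :
    (∮ w in C(0, b), w⁻¹ * log ((a - w) / (c - w))) = 0 := by
  have b_pos : 0 < b := (norm_nonneg a).trans_lt ha
  let f : ℂ → ℂ := fun u ↦ log ((1 - a * u) / (1 - c * u))
  have hf : DiffContOnCl ℂ f (ball 0 |b⁻¹|) :=
    (differentiableOn_log_one_sub_mul_div ha hc).diffContOnCl_ball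
      (by rw [abs_of_pos (inv_pos.mpr b_pos)])
  calc (∮ w in C(0, b), w⁻¹ * log ((a - w) / (c - w)))
      = ∮ w in C(0, b), w⁻¹ • f w⁻¹ :=
        circleIntegral.integral_congr b_pos.le fun w hw ↦ by
          rw [sub_div_sub_eq_one_sub_mul_inv (ne_of_mem_sphere hw b_pos.ne'), smul_eq_mul]
    _ = (2 * π * I : ℂ) • f 0 := circleIntegral_inv_smul_comp_inv b_pos.ne' hf
    _ = 0 := by simp [f]

/-- **Vanishing contour integral.**  For reals `0 < z < 1 < b`,
`∮_{|w|=b} (1/w) · Log ((z - w)/(1 - w)) dw = 0`, where `Log` is the principal complex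
logarithm and the contour is the positively oriented circle of radius `b` about `0`. -/
theorem vanishing_contour_integral (z b : ℝ) (hz0 : 0 < z) (hz1 : z < 1) (hb : 1 < b) :
    (∮ w in C(0, b), w⁻¹ * Complex.log (((z : ℂ) - w) / (1 - w))) = 0 := by
  have norm_z_lt : ‖(z : ℂ)‖ < b := by
    rw [Complex.norm_of_nonneg hz0.le]
    exact hz1.trans hb
  exact vanishing_contour_integral_general norm_z_lt (by rwa [norm_one])
end
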